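/- Let (v,w) be the improving switch that Bland(𝔅_n, π_0, 𝒩_{𝔅_n}) applies to a policy π that it visits, let π' be the twin policy of π, and let π̄' be the policy for 𝔇_n obtained from π' by applying the switches (x_{v,w}, y_{v,w}) and then (v, x_{v,w}). Then the edge (x_{v,π(v)}, v) is an improving switch for π̄', and in every run of policy iteration on 𝔇_n starting at π̄', the edge (x_{v,π(v)}, v) remains an improving switch at every step until it is applied or until an improving switch of the form (x_{u,·}, y_{u,·}) with 𝒩_V(u) > 𝒩_V(v) is applied. -/

import Mathlib

/-! ## The Markov decision process `𝔅_n` -/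

/-- Vertices of the MDP `𝔅_n`: a transportation vertex `t`, a sink `s`, a dummy vertex `d`,
and vertices `a i`, `b i` for `i ∈ {1,…,n}`. -/
inductive BV : Type where
  | t : BV
  | s : BV
  | d : BV
  | a : ℕ → BV
  | b : ℕ → BV
deriving DecidableEq

/-- The vertex `a i` for `i ∈ {1,…,n+1}`, with the convention `a (n+1) = s`. -/
def aN (n i : ℕ) : BV := if i = n + 1 then BV.s else BV.a i

/-- The vertex `b i` for `i ∈ {1,…,n+1}`, with the convention `b (n+1) = d`. -/
def bN (n i : ℕ) : BV := if i = n + 1 then BV.d else BV.b i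

/-- The vertex set of `𝔅_n`. -/
def IsBVertex (n : ℕ) : BV → Prop
  | BV.t => True
  | BV.s => True
  | BV.d => True
  | BV.a i => 1 ≤ i ∧ i ≤ n
  | BV.b i => 1 ≤ i ∧ i ≤ n

/-- The edge relation of `𝔅_n`: travel, enter, skip, board, stay, leave edges,
the edge `(d,s)` and the self-loop `(s,s)`. -/
def BEdge (n : ℕ) (u v : BV) : Prop :=
  (∃ i, 1 ≤ i ∧ i ≤ n ∧ u = BV.t ∧ v = BV.a i) ∨
  (∃ i, 1 ≤ i ∧ i ≤ n ∧ u = BV.a i ∧ v = BV.b i) ∨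
  (∃ i, 1 ≤ i ∧ i ≤ n ∧ u = BV.a i ∧ v = aN n (i + 1)) ∨
  (∃ i, 1 ≤ i ∧ i ≤ n ∧ u = BV.a i ∧ v = BV.t) ∨
  (∃ i, 1 ≤ i ∧ i ≤ n ∧ u = BV.b i ∧ v = bN n (i + 1)) ∨
  (∃ i, 1 ≤ i ∧ i ≤ n ∧ u = BV.b i ∧ v = aN n (i + 1)) ∨
  (u = BV.d ∧ v = BV.s) ∨ (u = BV.s ∧ v = BV.s)

/-- The reward function of `𝔅_n`: `r(enter i) = 2^i`, `r(stay i) = 3/4`,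
`r(board i) = -2^i + 5/4`, and reward `0` on all other edges. -/
def rB (n : ℕ) (u v : BV) : ℚ :=
  match u, v with
  | BV.a i, BV.b j => if i = j then 2 ^ i else 0
  | BV.a i, BV.t => -(2 ^ i) + 5 / 4
  | BV.b i, BV.b j => if j = i + 1 then 3 / 4 else 0
  | BV.b i, BV.d => if i = n then 3 / 4 else 0
  | _, _ => 0

/-- A policy for `𝔅_n` chooses an outgoing edge at every vertex. -/
def IsBPolicy (n : ℕ) (π : BV → BV) : Prop := ∀ u, IsBVertex n u → BEdge n u (π u)

/-- A policy is weak unichain if it reaches the sink `s` from every vertex. -/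
def BWeakUnichain (n : ℕ) (π : BV → BV) : Prop :=
  ∀ u, IsBVertex n u → ∃ k, π^[k] u = BV.s

open Classical in
/-- The value of a vertex `v` w.r.t. a (weak unichain) policy `π`:
the sum of the rewards along the path that `π` takes from `v` to the sink `s`. -/
noncomputable def BVal (n : ℕ) (π : BV → BV) (v : BV) : ℚ :=
  if h : ∃ k, π^[k] v = BV.s then
    ∑ i ∈ Finset.range (Nat.find h), rB n (π^[i] v) (π^[i + 1] v)
  else 0

/-- The reduced costs of the edge `(u,v)` w.r.t. the policy `π`. -/
noncomputable def zB (n : ℕ) (π : BV → BV) (u v : BV) : ℚ :=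
  rB n u v + BVal n π v - BVal n π u

/-- The edge `(u,v)` is an improving switch for `π` if its reduced costs are positive. -/
def BImproving (n : ℕ) (π : BV → BV) (u v : BV) : Prop :=
  BEdge n u v ∧ 0 < zB n π u v

/-- The Bland numbering `𝒩_{𝔅_n}` of the edges of `𝔅_n`. -/
def NB (n : ℕ) (u v : BV) : ℕ :=
  match u, v with
  | BV.t, BV.a i => i
  | BV.a i, BV.b _ => n + 1 + 5 * (i - 1)
  | BV.a i, BV.a _ => n + 2 + 5 * (i - 1)
  | BV.a i, BV.s => n + 2 + 5 * (i - 1)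
  | BV.a i, BV.t => n + 3 + 5 * (i - 1)
  | BV.b i, BV.b _ => n + 4 + 5 * (i - 1)
  | BV.b i, BV.d => n + 4 + 5 * (i - 1)
  | BV.b i, BV.a _ => n + 5 + 5 * (i - 1)
  | BV.b i, BV.s => n + 5 + 5 * (i - 1)
  | BV.d, BV.s => 6 * n + 1
  | BV.s, BV.s => 6 * n + 2
  | _, _ => 0

/-- One step of Bland's policy iteration with edge numbering `N`:
apply the improving switch with the smallest number. -/
def IsBlandStep (n : ℕ) (N : BV → BV → ℕ) (π π' : BV → BV) : Prop :=
  ∃ u v, BImproving n π u v ∧ (∀ u' v', BImproving n π u' v' → N u v ≤ N u' v') ∧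
    π' = Function.update π u v

/-- `BlandReaches n N π ψ` says that Bland's policy iteration started at `π` visits `ψ`. -/
def BlandReaches (n : ℕ) (N : BV → BV → ℕ) : (BV → BV) → (BV → BV) → Prop :=
  Relation.ReflTransGen (IsBlandStep n N)

/-- The canonical policy `π_0` for `0`: `travel 1`, `skip i` and `leave i` are active. -/
def pi0 (n : ℕ) : BV → BV := fun u =>
  match u with
  | BV.t => BV.a 1
  | BV.a i => aN n (i + 1)
  | BV.b i => aN n (i + 1)
  | BV.d => BV.s
  | BV.s => BV.s

/-- The optimal policy `π_*`: `travel 1`, `enter i` for all `i`, `leave j` for `j < n`,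
and `stay n` are active. -/
def piStar (n : ℕ) : BV → BV := fun u =>
  match u with
  | BV.t => BV.a 1
  | BV.a i => BV.b i
  | BV.b i => if i = n then BV.d else BV.a (i + 1)
  | BV.d => BV.s
  | BV.s => BV.s

/-! ## Bits and canonical policies -/

/-- The least significant set bit `ℓ_1(x)` (1-based). -/
noncomputable def lsb (x : ℕ) : ℕ := sInf {i | 1 ≤ i ∧ Nat.testBit x (i - 1)}

/-- The most significant set bit `m(x)` (1-based). -/
noncomputable def msb1 (x : ℕ) : ℕ := sSup {i | 1 ≤ i ∧ Nat.testBit x (i - 1)}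

/-- The least unset bit `ℓ_0(x)` (1-based). -/
noncomputable def lzero (x : ℕ) : ℕ := sInf {i | 1 ≤ i ∧ ¬ Nat.testBit x (i - 1)}

/-- `L_i(x) = max { j ≤ i-2 | x_j = 1 or j = 1 }` (1-based bits). -/
noncomputable def Lfun (i x : ℕ) : ℕ :=
  sSup {j | 1 ≤ j ∧ j ≤ i - 2 ∧ (Nat.testBit x (j - 1) ∨ j = 1)}

/-- `IsCanonical n x π` says that `π` is the canonical policy `π_x` for `x`. -/
noncomputable def IsCanonical (n x : ℕ) (π : BV → BV) : Prop :=
  IsBPolicy n π ∧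
  if x = 0 then
    π BV.t = BV.a 1 ∧
      ∀ i, 1 ≤ i → i ≤ n → π (BV.a i) = aN n (i + 1) ∧ π (BV.b i) = aN n (i + 1)
  else
    π BV.t = BV.a (lsb x) ∧
    π (BV.b (msb1 x)) = aN n (msb1 x + 1) ∧
    (∀ i, msb1 x < i → i ≤ n → π (BV.a i) = aN n (i + 1) ∧ π (BV.b i) = aN n (i + 1)) ∧
    ∀ i, 1 ≤ i → i ≤ n → Nat.testBit x (i - 1) →
      π (BV.a i) = BV.b i ∧
      (i = 2 → π (BV.b 1) = BV.a 2 ∧ (¬ Nat.testBit x 0 → π (BV.a 1) = BV.a 2)) ∧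
      (3 ≤ i → Nat.testBit x (i - 2) → π (BV.b (i - 1)) = BV.a i) ∧
      (3 ≤ i → ¬ Nat.testBit x (i - 2) →
        π (BV.b (i - 1)) = BV.b i ∧ π (BV.a (i - 1)) = BV.a i ∧
        π (BV.b (i - 2)) = BV.a (i - 1) ∧
        (Lfun i x < i - 2 →
          ∀ j, Lfun i x + 1 ≤ j → j ≤ i - 2 →
            π (BV.a j) = BV.t ∧ π (BV.b (j - 1)) = BV.b j) ∧
        (Lfun i x = 1 → ¬ Nat.testBit x 0 → π (BV.a 1) = BV.t))

/-- Activating a list of edges in a policy, from left to right. -/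
def activateList (π : BV → BV) (L : List (BV × BV)) : BV → BV :=
  L.foldl (fun σ e => Function.update σ e.1 e.2) π

/-- The canonical phases w.r.t. an odd number `x` (with `ℓ := ℓ_0(x)`), as a list of edges
to be activated in order. -/
noncomputable def phaseList (n x : ℕ) : List (BV × BV) :=
  let ℓ := lzero x
  (if Nat.testBit x ℓ then [(BV.b ℓ, aN n (ℓ + 1))] else []) ++
  (if Nat.testBit x ℓ ∨ msb1 x < ℓ then [(BV.b (ℓ - 1), BV.b ℓ)] else []) ++
  [(BV.a ℓ, BV.b ℓ), (BV.t, BV.a ℓ)] ++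
  ((List.range (ℓ - 2)).map fun j => (BV.a (j + 1), BV.t)) ++
  [(BV.a (ℓ - 1), BV.a ℓ)] ++
  (((List.range (ℓ - 3)).reverse).map fun j => (BV.b (j + 1), BV.b (j + 2))) ++
  (if ℓ = 2 then [(BV.b 1, BV.a 2)] else [])

/-! ## The Markov decision process `𝔇_n` -/

/-- Vertices of `𝔇_n`: the original vertices (`base`), and for every edge `(v,w)` of `𝔅_n`
other than the self-loop, the gadget vertices `x v w`, `y v w`, `z v w`. -/
inductive DV : Type where
  | base : BV → DV
  | x : BV → BV → DV
  | y : BV → BV → DV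
  | z : BV → BV → DV
deriving DecidableEq

/-- The edges of `𝔅_n` that get replaced by gadgets (all edges except the self-loop `(s,s)`). -/
def DEdgePair (n : ℕ) (v w : BV) : Prop := BEdge n v w ∧ v ≠ BV.s

/-- The vertex set of `𝔇_n`. -/
def IsDVertex (n : ℕ) : DV → Prop
  | DV.base v => IsBVertex n v
  | DV.x v w => DEdgePair n v w
  | DV.y v w => DEdgePair n v w
  | DV.z v w => DEdgePair n v w

/-- The agent vertices of `𝔇_n` (all vertices except the randomization vertices `y v w`). -/
def IsDAgent (n : ℕ) : DV → Prop
  | DV.base v => IsBVertex n v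
  | DV.x v w => DEdgePair n v w
  | DV.y _ _ => False
  | DV.z v w => DEdgePair n v w

/-- The agent edges of `𝔇_n`. -/
def DEdge (n : ℕ) (u u' : DV) : Prop :=
  (∃ v w, DEdgePair n v w ∧
    ((u = DV.base v ∧ u' = DV.x v w) ∨ (u = DV.x v w ∧ u' = DV.base v) ∨
     (u = DV.x v w ∧ u' = DV.y v w) ∨ (u = DV.z v w ∧ u' = DV.base w))) ∨
  (u = DV.base BV.s ∧ u' = DV.base BV.s)

/-- The reward function of `𝔇_n`: the edge `(z v w, w)` carries the reward of the original
edge `(v,w)`; all other agent edges have reward `0`. -/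
def rD (n : ℕ) (u u' : DV) : ℚ :=
  match u, u' with
  | DV.z v w, DV.base w' => if w' = w then rB n v w else 0
  | _, _ => 0

/-- A policy for `𝔇_n` chooses an outgoing agent edge at every agent vertex. -/
def IsDPolicy (n : ℕ) (π : DV → DV) : Prop := ∀ u, IsDAgent n u → DEdge n u (π u)

/-- `IsDVal n p π V` says that `V` satisfies the Bellman equations characterizing the value
function of the policy `π` for `𝔇_n` with probabilities `p`, with `V s = 0`. -/
def IsDVal (n : ℕ) (p : BV → ℚ) (π : DV → DV) (V : DV → ℚ) : Prop :=
  V (DV.base BV.s) = 0 ∧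
  (∀ u, IsDAgent n u → V u = rD n u (π u) + V (π u)) ∧
  (∀ v w, DEdgePair n v w →
    V (DV.y v w) = p v * V (DV.z v w) + (1 - p v) * V (DV.base v))

open Classical in
/-- The value function of a (weak unichain) policy `π` for `𝔇_n`: the unique solution of the
Bellman equations (normalized to `0` outside the vertex set). -/
noncomputable def DVal (n : ℕ) (p : BV → ℚ) (π : DV → DV) : DV → ℚ :=
  if h : ∃! V : DV → ℚ, IsDVal n p π V ∧ ∀ u, ¬ IsDVertex n u → V u = 0 then
    h.exists.choose
  else fun _ => 0

/-- The reduced costs of an agent edge `(u,u')` of `𝔇_n` w.r.t. the policy `π`. -/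
noncomputable def zD (n : ℕ) (p : BV → ℚ) (π : DV → DV) (u u' : DV) : ℚ :=
  rD n u u' + DVal n p π u' - DVal n p π u

/-- An agent edge of `𝔇_n` is an improving switch if its reduced costs are positive. -/
def DImproving (n : ℕ) (p : BV → ℚ) (π : DV → DV) (u u' : DV) : Prop :=
  DEdge n u u' ∧ 0 < zD n p π u u'

/-- One (agent or positive-probability randomization) step of the process `𝔇_n` under `π`. -/
def DStep (n : ℕ) (p : BV → ℚ) (π : DV → DV) (u u' : DV) : Prop :=
  (IsDAgent n u ∧ u' = π u) ∨
  (∃ v w, DEdgePair n v w ∧ u = DV.y v w ∧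
    ((u' = DV.z v w ∧ 0 < p v) ∨ (u' = DV.base v ∧ 0 < 1 - p v)))

/-- A policy for `𝔇_n` is weak unichain if it reaches `s` with probability one from every
vertex, i.e. `s` is reachable via active/positive-probability steps from every vertex. -/
def DWeakUnichain (n : ℕ) (p : BV → ℚ) (π : DV → DV) : Prop :=
  ∀ u, IsDVertex n u → Relation.ReflTransGen (DStep n p π) u (DV.base BV.s)

/-- The twin policy of a policy `π` for `𝔅_n`: every vertex `v ≠ s` is `π v`-oriented. -/
def twin (π : BV → BV) : DV → DV := fun u =>
  match u with
  | DV.base v => if v = BV.s then DV.base BV.s else DV.x v (π v)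
  | DV.x v w => if w = π v then DV.y v w else DV.base v
  | DV.y v w => DV.y v w
  | DV.z _ w => DV.base w

/-- The vertex numbering `𝒩_V` of `𝔅_n`: the order `(t, a 1, b 1, a 2, b 2, …, a n, b n, d, s)`. -/
def NV (n : ℕ) : BV → ℕ
  | BV.t => 1
  | BV.a i => 2 * i
  | BV.b i => 2 * i + 1
  | BV.d => 2 * n + 2
  | BV.s => 2 * n + 3

/-- The specific probabilities `p_v = 2^{-𝒩_V(v)·(n+5)}`. -/
noncomputable def pSpec (n : ℕ) (v : BV) : ℚ := (2 : ℚ) ^ (-((NV n v * (n + 5) : ℕ) : ℤ))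

/-- The set `B(v)` of agent edges of `𝔇_n` belonging to the vertex `v`. -/
def Belongs (n : ℕ) (v : BV) (e : DV × DV) : Prop :=
  ∃ w, DEdgePair n v w ∧
    (e = (DV.x v w, DV.y v w) ∨ e = (DV.base v, DV.x v w) ∨ e = (DV.x v w, DV.base v))

/-- Applying the improving switch `e` to the policy `π` yields `π'`. -/
def DApply (n : ℕ) (p : BV → ℚ) (π : DV → DV) (e : DV × DV) (π' : DV → DV) : Prop :=
  DImproving n p π e.1 e.2 ∧ π' = Function.update π e.1 e.2

/-- One step of Bland's policy iteration on `𝔇_n` with edge numbering `N`. -/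
def IsBlandStepD (n : ℕ) (p : BV → ℚ) (N : DV → DV → ℕ) (π π' : DV → DV) : Prop :=
  ∃ u u', DImproving n p π u u' ∧ (∀ a b, DImproving n p π a b → N u u' ≤ N a b) ∧
    π' = Function.update π u u'

/-- One step of Dantzig's policy iteration on `𝔇_n`: apply an improving switch of maximal
reduced costs. -/
def DantzigStep (n : ℕ) (p : BV → ℚ) (π π' : DV → DV) : Prop :=
  ∃ u u', DImproving n p π u u' ∧
    (∀ a b, DImproving n p π a b → zD n p π a b ≤ zD n p π u u') ∧
    π' = Function.update π u u'

/-- The finite set of vertices of `𝔅_n`, as a `Finset`. -/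
noncomputable def BVSet (n : ℕ) : Finset BV :=
  {BV.t, BV.d, BV.s} ∪ (Finset.Icc 1 n).image BV.a ∪ (Finset.Icc 1 n).image BV.b

/-- The finite set of agent vertices of `𝔇_n`, as a `Finset`. -/
noncomputable def DAgentSet (n : ℕ) : Finset DV := by
  classical
  exact ((BVSet n).image DV.base) ∪
    (((BVSet n ×ˢ BVSet n).filter fun e => DEdgePair n e.1 e.2).image fun e => DV.x e.1 e.2) ∪
    (((BVSet n ×ˢ BVSet n).filter fun e => DEdgePair n e.1 e.2).image fun e => DV.z e.1 e.2)

/-- The objective of the Largest Increase rule: the sum of the values of all agent vertices. -/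
noncomputable def LIobj (n : ℕ) (p : BV → ℚ) (π : DV → DV) : ℚ :=
  ∑ u ∈ DAgentSet n, DVal n p π u

/-- One step of the Largest Increase policy iteration on `𝔇_n`: apply an improving switch
maximizing the sum of all agent vertex values of the resulting policy. -/
def LIStep (n : ℕ) (p : BV → ℚ) (π π' : DV → DV) : Prop :=
  ∃ u u', DImproving n p π u u' ∧
    (∀ a b, DImproving n p π a b →
      LIobj n p (Function.update π a b) ≤ LIobj n p (Function.update π u u')) ∧
    π' = Function.update π u u'

/-- `N` is a Bland numbering `𝒩_{𝔇_n}` for `𝔇_n`: it is injective on agent edges, the edges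
`(x v w, v)` all come first, within each gadget `(x v w, y v w)` precedes `(v, x v w)`,
the gadget blocks are ordered according to `𝒩_{𝔅_n}`, and the self-loop comes last. -/
def IsDBlandNumbering (n : ℕ) (N : DV → DV → ℕ) : Prop :=
  (∀ u₁ u₂ u₁' u₂', DEdge n u₁ u₂ → DEdge n u₁' u₂' → N u₁ u₂ = N u₁' u₂' →
    u₁ = u₁' ∧ u₂ = u₂') ∧
  (∀ v w v' w', DEdgePair n v w → DEdgePair n v' w' →
    N (DV.x v w) (DV.base v) < N (DV.x v' w') (DV.y v' w')) ∧
  (∀ v w, DEdgePair n v w → N (DV.x v w) (DV.y v w) < N (DV.base v) (DV.x v w)) ∧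
  (∀ v w v' w', DEdgePair n v w → DEdgePair n v' w' → NB n v w < NB n v' w' →
    N (DV.base v) (DV.x v w) < N (DV.x v' w') (DV.y v' w')) ∧
  (∀ v w, DEdgePair n v w → N (DV.base v) (DV.x v w) < N (DV.base BV.s) (DV.base BV.s))

set_option linter.unusedSimpArgs false

lemma NV_t (n : ℕ) : NV n BV.t = 1 := rfl
lemma NV_a (n i : ℕ) : NV n (BV.a i) = 2 * i := rfl
lemma NV_b (n i : ℕ) : NV n (BV.b i) = 2 * i + 1 := rfl
lemma NV_d (n : ℕ) : NV n BV.d = 2 * n + 2 := rfl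
lemma NV_s (n : ℕ) : NV n BV.s = 2 * n + 3 := rfl

/-! ### Basic facts about edges of `𝔅_n` -/

/-- A potential: the maximal reward collectable on the way from `t`. -/
def potB (n : ℕ) : BV → ℚ
  | BV.t => 0
  | BV.a i => 2 ^ i - 2
  | BV.b i => 2 ^ (i + 1) - 2
  | BV.d => 2 ^ (n + 1)
  | BV.s => 2 ^ (n + 1)

lemma edge_cases {n : ℕ} {u v : BV} (h : BEdge n u v) (hs : u ≠ BV.s) :
    (∃ i, 1 ≤ i ∧ i ≤ n ∧ u = BV.a i ∧ v = BV.t ∧ rB n u v = -(2 ^ i) + 5 / 4) ∨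
    (v ≠ BV.t ∧ rB n u v + potB n u ≤ potB n v ∧ NV n u < NV n v) := by
  rcases h with ⟨i, h1, h2, rfl, rfl⟩ | ⟨i, h1, h2, rfl, rfl⟩ | ⟨i, h1, h2, rfl, rfl⟩ |
    ⟨i, h1, h2, rfl, rfl⟩ | ⟨i, h1, h2, rfl, rfl⟩ | ⟨i, h1, h2, rfl, rfl⟩ | ⟨rfl, rfl⟩ | ⟨rfl, rfl⟩
  · right
    refine ⟨by simp, ?_, by simp only [NV_t, NV_a, NV_b, NV_d, NV_s]; omega⟩
    have : (2 : ℚ) ^ 1 ≤ 2 ^ i := pow_le_pow_right₀ (by norm_num) h1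
    simp only [rB, potB]; linarith
  · right
    refine ⟨by simp, ?_, by simp only [NV_t, NV_a, NV_b, NV_d, NV_s]; omega⟩
    simp only [rB, potB, if_true, pow_succ]; linarith
  · right
    have hp : (0 : ℚ) < 2 ^ i := by positivity
    unfold aN
    split_ifs with hi
    · obtain rfl : i = n := by omega
      refine ⟨by simp, ?_, by simp only [NV_t, NV_a, NV_b, NV_d, NV_s]; omega⟩
      simp only [rB, potB, pow_succ]; linarith
    · refine ⟨by simp, ?_, by simp only [NV_t, NV_a, NV_b, NV_d, NV_s]; omega⟩
      simp only [rB, potB, pow_succ]; linarith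
  · left
    exact ⟨i, h1, h2, rfl, rfl, by simp [rB]⟩
  · right
    have hp : (2 : ℚ) ^ 1 ≤ 2 ^ i := pow_le_pow_right₀ (by norm_num) h1
    unfold bN
    split_ifs with hi
    · obtain rfl : i = n := by omega
      refine ⟨by simp, ?_, by simp only [NV_t, NV_a, NV_b, NV_d, NV_s]; omega⟩
      simp only [rB, potB, pow_succ, if_true]; linarith
    · refine ⟨by simp, ?_, by simp only [NV_t, NV_a, NV_b, NV_d, NV_s]; omega⟩
      simp only [rB, potB, pow_succ, if_true]; linarith
  · right
    have hp : (0 : ℚ) < 2 ^ i := by positivity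
    unfold aN
    split_ifs with hi
    · obtain rfl : i = n := by omega
      refine ⟨by simp, ?_, by simp only [NV_t, NV_a, NV_b, NV_d, NV_s]; omega⟩
      simp only [rB, potB, pow_succ]; linarith
    · refine ⟨by simp, ?_, by simp only [NV_t, NV_a, NV_b, NV_d, NV_s]; omega⟩
      simp only [rB, potB, pow_succ]; linarith
  · right
    exact ⟨by simp, by simp [rB, potB], by simp only [NV_t, NV_a, NV_b, NV_d, NV_s]; omega⟩
  · exact absurd rfl hs

lemma edge_vertex {n : ℕ} {u v : BV} (h : BEdge n u v) : IsBVertex n u ∧ IsBVertex n v := by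
  rcases h with ⟨i, h1, h2, rfl, rfl⟩ | ⟨i, h1, h2, rfl, rfl⟩ | ⟨i, h1, h2, rfl, rfl⟩ |
    ⟨i, h1, h2, rfl, rfl⟩ | ⟨i, h1, h2, rfl, rfl⟩ | ⟨i, h1, h2, rfl, rfl⟩ | ⟨rfl, rfl⟩ | ⟨rfl, rfl⟩
  all_goals try unfold aN
  all_goals try unfold bN
  all_goals try split_ifs
  all_goals simp only [IsBVertex, true_and, and_true]
  all_goals omega

lemma edge_s {n : ℕ} {v : BV} (h : BEdge n BV.s v) : v = BV.s := by
  simpa [BEdge] using h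

lemma edge_d {n : ℕ} {v : BV} (h : BEdge n BV.d v) : v = BV.s := by
  simpa [BEdge] using h

lemma edge_t {n : ℕ} {v : BV} (h : BEdge n BV.t v) : ∃ i, 1 ≤ i ∧ i ≤ n ∧ v = BV.a i := by
  simpa [BEdge] using h

lemma edge_a {n i : ℕ} {v : BV} (h : BEdge n (BV.a i) v) : (1 ≤ i ∧ i ≤ n) ∧
    (v = BV.b i ∨ v = aN n (i + 1) ∨ v = BV.t) := by
  simp only [BEdge, reduceCtorEq, false_and, and_false, exists_false, false_or, or_false,
    BV.a.injEq] at h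
  rcases h with ⟨j, h1, h2, rfl, rfl⟩ | ⟨j, h1, h2, rfl, rfl⟩ | ⟨j, h1, h2, rfl, rfl⟩ <;> simp [*]

lemma edge_b {n i : ℕ} {v : BV} (h : BEdge n (BV.b i) v) : (1 ≤ i ∧ i ≤ n) ∧
    (v = bN n (i + 1) ∨ v = aN n (i + 1)) := by
  simp only [BEdge, reduceCtorEq, false_and, and_false, exists_false, false_or, or_false,
    BV.b.injEq] at h
  rcases h with ⟨j, h1, h2, rfl, rfl⟩ | ⟨j, h1, h2, rfl, rfl⟩ <;> simp [*]

/-- A strict potential: every edge except the self-loop strictly decreases `potS - value`. -/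
def potS (n : ℕ) (u : BV) : ℚ := potB n u + (NV n u : ℚ) / (4 * n + 4)

lemma edge_potS {n : ℕ} {u v : BV} (h : BEdge n u v) (hs : u ≠ BV.s) :
    rB n u v + potS n u < potS n v := by
  rcases edge_cases h hs with ⟨i, h1, h2, rfl, rfl, hr⟩ | ⟨-, hr, hN⟩
  · rw [hr]
    have hn : (0 : ℚ) < 4 * n + 4 := by
      have : (1 : ℚ) ≤ n := by exact_mod_cast h1.trans h2
      linarith
    have hi : (i : ℚ) ≤ n := by exact_mod_cast h2
    have : ((2 * i : ℕ) : ℚ) / (4 * n + 4) ≤ 1 / 2 := by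
      rw [div_le_iff₀ hn]; push_cast; linarith
    have h3 : (0 : ℚ) ≤ ((1 : ℕ) : ℚ) / (4 * n + 4) := by positivity
    simp only [potS, potB, NV]
    linarith
  · have hn : (0 : ℚ) < 4 * n + 4 := by positivity
    have : (NV n u : ℚ) / (4 * n + 4) < (NV n v : ℚ) / (4 * n + 4) := by
      apply div_lt_div_of_pos_right _ hn
      exact_mod_cast hN
    simp only [potS]
    linarith

/-! ### Values and weak unichain policies for `𝔅_n` -/

lemma bv_finite (n : ℕ) : {u : BV | IsBVertex n u}.Finite := by
  apply (BVSet n).finite_toSet.subset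
  intro u hu
  cases u <;> simp_all [BVSet, IsBVertex]

/-- If the edges of a policy have nonnegative reduced costs w.r.t. some `V`, the policy is
weak unichain. -/
lemma unichain_of_potential {n : ℕ} {φ : BV → BV} (hφ : IsBPolicy n φ) (V : BV → ℚ)
    (hV : ∀ u, IsBVertex n u → V u ≤ rB n u (φ u) + V (φ u)) : BWeakUnichain n φ := by
  have hwf : ({u : BV | IsBVertex n u}).WellFoundedOn
      (fun x y => potS n y + V y < potS n x + V x) := by
    have : IsStrictOrder BV (fun x y => potS n y + V y < potS n x + V x) :=
      { irrefl := fun _ => lt_irrefl _, trans := fun _ _ _ h1 h2 => lt_trans h2 h1 }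
    exact (bv_finite n).wellFoundedOn
  intro u hu
  refine hwf.induction (P := fun u => ∃ k, φ^[k] u = BV.s) hu ?_
  intro y hy ih
  by_cases hs : y = BV.s
  · exact ⟨0, hs⟩
  · have he := hφ y hy
    obtain ⟨k, hk⟩ := ih (φ y) (edge_vertex he).2 (by
      have := edge_potS he hs
      have := hV y hy
      linarith)
    exact ⟨k + 1, hk⟩

lemma policy_s {n : ℕ} {φ : BV → BV} (hφ : IsBPolicy n φ) : φ BV.s = BV.s :=
  edge_s (hφ BV.s trivial)

lemma BVal_s (n : ℕ) (φ : BV → BV) : BVal n φ BV.s = 0 := by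
  unfold BVal
  have h : ∃ k, φ^[k] BV.s = BV.s := ⟨0, rfl⟩
  rw [dif_pos h]
  have : Nat.find h = 0 := by simp
  convert Finset.sum_range_zero _

lemma BVal_rec {n : ℕ} {φ : BV → BV} (hφ : IsBPolicy n φ) (hw : BWeakUnichain n φ) {u : BV}
    (hu : IsBVertex n u) : BVal n φ u = rB n u (φ u) + BVal n φ (φ u) := by
  by_cases hs : u = BV.s
  · subst hs
    rw [policy_s hφ, BVal_s]; simp [rB]
  · have h1 := hw u hu
    have h2 := hw (φ u) (edge_vertex (hφ u hu)).2
    unfold BVal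
    rw [dif_pos h1, dif_pos h2, Nat.find_comp_succ h1 h2 hs, Finset.sum_range_succ']
    rw [add_comm]
    rfl

/-- Comparison of a super-solution along `φ` with the value function. -/
lemma le_BVal {n : ℕ} {φ : BV → BV} (hφ : IsBPolicy n φ) (hw : BWeakUnichain n φ) (V : BV → ℚ)
    (hVs : V BV.s ≤ 0) (hV : ∀ u, IsBVertex n u → V u ≤ rB n u (φ u) + V (φ u)) {u : BV}
    (hu : IsBVertex n u) : V u ≤ BVal n φ u := by
  obtain ⟨k, hk⟩ := hw u hu
  induction k generalizing u with
  | zero => 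
    have : u = BV.s := hk
    subst this
    rw [BVal_s]; exact hVs
  | succ k ih =>
    have := ih (edge_vertex (hφ u hu)).2 hk
    have := hV u hu
    rw [BVal_rec hφ hw hu]
    linarith

lemma eq_BVal {n : ℕ} {φ : BV → BV} (hφ : IsBPolicy n φ) (hw : BWeakUnichain n φ) (V : BV → ℚ)
    (hVs : V BV.s = 0)
    (hV : ∀ u, IsBVertex n u → u ≠ BV.s → V u = rB n u (φ u) + V (φ u)) {u : BV}
    (hu : IsBVertex n u) : V u = BVal n φ u := by
  obtain ⟨k, hk⟩ := hw u hu
  induction k generalizing u with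
  | zero => 
    have : u = BV.s := hk
    subst this
    rw [BVal_s]; exact hVs
  | succ k ih =>
    by_cases hs : u = BV.s
    · subst hs
      rw [BVal_s]; exact hVs
    have := ih (edge_vertex (hφ u hu)).2 hk
    have := hV u hu hs
    rw [BVal_rec hφ hw hu]
    linarith

lemma policy_update {n : ℕ} {φ : BV → BV} (hφ : IsBPolicy n φ) {v w : BV} (h : BEdge n v w) :
    IsBPolicy n (Function.update φ v w) := by
  intro u hu
  by_cases huv : u = v
  · subst huv; simpa using h
  · simpa [huv] using hφ u hu

lemma improve {n : ℕ} {φ : BV → BV} (hφ : IsBPolicy n φ) (hw : BWeakUnichain n φ) {v w : BV}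
    (h : BImproving n φ v w) :
    IsBPolicy n (Function.update φ v w) ∧ BWeakUnichain n (Function.update φ v w) ∧
      ∀ u, IsBVertex n u → BVal n φ u ≤ BVal n (Function.update φ v w) u := by
  have hp := policy_update hφ h.1
  have key : ∀ u, IsBVertex n u → BVal n φ u ≤
      rB n u (Function.update φ v w u) + BVal n φ (Function.update φ v w u) := by
    intro u hu
    by_cases huv : u = v
    · subst huv
      have := h.2
      simp only [zB] at this
      simp only [Function.update_self]
      linarith
    · simp only [Function.update_of_ne huv]
      exact (BVal_rec hφ hw hu).le
  have hu := unichain_of_potential hp _ key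
  exact ⟨hp, hu, fun u hu' => le_BVal hp hu _ (BVal_s n φ).le key hu'⟩

lemma pi0_good (n : ℕ) (hn : 1 ≤ n) : IsBPolicy n (pi0 n) ∧ BWeakUnichain n (pi0 n) := by
  have hp : IsBPolicy n (pi0 n) := by
    intro u hu
    cases u with
    | t => exact Or.inl ⟨1, le_refl _, hn, rfl, rfl⟩
    | s => simp [BEdge, pi0]
    | d => simp [BEdge, pi0]
    | a i => exact Or.inr (Or.inr (Or.inl ⟨i, hu.1, hu.2, rfl, rfl⟩))
    | b i => exact Or.inr (Or.inr (Or.inr (Or.inr (Or.inr (Or.inl ⟨i, hu.1, hu.2, rfl, rfl⟩)))))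
  refine ⟨hp, unichain_of_potential hp (fun _ => 0) ?_⟩
  intro u hu
  cases u <;> simp only [pi0, aN] <;> (try split_ifs) <;> simp [rB]

lemma reach_good {n : ℕ} (hn : 1 ≤ n) {N : BV → BV → ℕ} {π : BV → BV}
    (h : BlandReaches n N (pi0 n) π) : IsBPolicy n π ∧ BWeakUnichain n π := by
  induction h with
  | refl => exact pi0_good n hn
  | tail _ hstep ih =>
    obtain ⟨u, v, himp, -, rfl⟩ := hstep
    have := improve ih.1 ih.2 himp
    exact ⟨this.1, this.2.1⟩

/-! ### The key lemma about `𝔅_n` -/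

lemma NV_le {n : ℕ} {u : BV} (hu : IsBVertex n u) : NV n u ≤ 2 * n + 3 := by
  cases u <;> simp_all [NV, IsBVertex]
  all_goals omega

/-- Values of vertices above `v`: unchanged, or reaching `t` along an unchanged path. -/
lemma above {n : ℕ} {π φ : BV → BV} (hπ : IsBPolicy n π) (hπu : BWeakUnichain n π)
    (hφ : IsBPolicy n φ) (hφu : BWeakUnichain n φ) (v : BV)
    (hag : ∀ u, IsBVertex n u → NV n v < NV n u → φ u = π u) :
    ∀ m u, IsBVertex n u → NV n v < NV n u → 2 * n + 3 - NV n u ≤ m →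
      BVal n φ u = BVal n π u ∨
      ∃ C : ℚ, C ≤ - potB n u - 3 / 4 ∧ BVal n π u = C + BVal n π BV.t ∧
        BVal n φ u = C + BVal n φ BV.t := by
  intro m
  induction m with
  | zero =>
    intro u hu h1 h2
    have hs : u = BV.s := by
      cases u with
      | s => rfl
      | t => simp only [NV_t, NV_a, NV_b, NV_d, NV_s] at h2; omega
      | d => simp only [NV_t, NV_a, NV_b, NV_d, NV_s] at h2; omega
      | a i => obtain ⟨_, _⟩ := hu; simp only [NV_t, NV_a, NV_b, NV_d, NV_s] at h2; omega
      | b i => obtain ⟨_, _⟩ := hu; simp only [NV_t, NV_a, NV_b, NV_d, NV_s] at h2; omega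
    subst hs
    left; simp [BVal_s]
  | succ m ih =>
    intro u hu h1 h2
    by_cases hs : u = BV.s
    · subst hs; left; simp [BVal_s]
    have e1 := BVal_rec hπ hπu hu
    have e2 := BVal_rec hφ hφu hu
    rw [hag u hu h1] at e2
    have he := hπ u hu
    rcases edge_cases he hs with ⟨i, i1, i2, rfl, ht, hr⟩ | ⟨-, hr, hN⟩
    · right
      refine ⟨rB n (BV.a i) (π (BV.a i)), ?_, ?_, ?_⟩
      · rw [hr]; simp only [potB]; linarith
      · rw [ht] at e1 ⊢; exact e1
      · rw [ht] at e2 ⊢; exact e2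
    · have := NV_le (edge_vertex he).2
      rcases ih (π u) (edge_vertex he).2 (by omega) (by omega) with h | ⟨C, c1, c2, c3⟩
      · left; rw [e1, e2, h]
      · right
        refine ⟨rB n u (π u) + C, by linarith, by linarith, by linarith⟩

/-- The path of `t` below `v`: it reaches `v`, or jumps over it. -/
lemma below {n : ℕ} {φ : BV → BV}
    (hφ : IsBPolicy n φ) (hφu : BWeakUnichain n φ) (v : BV) (hv : NV n v ≤ 2 * n + 1)
    (hvv : IsBVertex n v) :
    ∀ m u (R : ℚ), IsBVertex n u → u ≠ BV.t → NV n u ≤ NV n v → NV n v - NV n u ≤ m →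
      R ≤ potB n u → BVal n φ BV.t = R + BVal n φ u →
      (∃ R : ℚ, R ≤ potB n v ∧ BVal n φ BV.t = R + BVal n φ v) ∨
      (∃ j, v = BV.a j ∧ ∃ R : ℚ, R ≤ 2 ^ j - 2 + 3 / 4 ∧
        BVal n φ BV.t = R + BVal n φ (BV.b j)) ∨
      (∃ j, v = BV.b j ∧ ∃ R : ℚ, R ≤ 2 ^ j - 2 ∧
        BVal n φ BV.t = R + BVal n φ (aN n (j + 1))) := by
  intro m
  have inj : ∀ u, IsBVertex n u → u ≠ BV.t → NV n u = NV n v → u = v := by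
    intro u hu hut h
    cases u <;> cases v <;> simp_all [NV, IsBVertex] <;> omega
  induction m with
  | zero =>
    intro u R hu hut h1 h2 hR hval
    have := inj u hu hut (by omega)
    subst this
    exact Or.inl ⟨R, hR, hval⟩
  | succ m ih =>
    intro u R hu hut h1 h2 hR hval
    rcases h1.eq_or_lt with h1 | h1
    · have := inj u hu hut h1
      subst this
      exact Or.inl ⟨R, hR, hval⟩
    have hs : u ≠ BV.s := by rintro rfl; simp only [NV_t, NV_a, NV_b, NV_d, NV_s] at h1; omega
    have he := hφ u hu
    have e1 := BVal_rec hφ hφu hu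
    rcases edge_cases he hs with ⟨i, i1, i2, rfl, ht, hr⟩ | ⟨ht, hr, hN⟩
    · exfalso
      rw [hr] at e1
      rw [ht] at e1
      simp only [potB] at hR
      linarith
    · by_cases hle : NV n (φ u) ≤ NV n v
      · exact ih (φ u) (R + rB n u (φ u)) (edge_vertex he).2 ht hle (by omega) (by linarith)
          (by linarith)
      · right
        cases u with
        | t => exact absurd rfl hut
        | s => exact absurd rfl hs
        | d => simp only [NV_t, NV_a, NV_b, NV_d, NV_s] at h1; omega
        | a i =>
          right
          obtain ⟨⟨i1, i2⟩, hc⟩ := edge_a he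
          have hvb : v = BV.b i ∧ φ (BV.a i) = aN n (i + 1) := by
            rcases hc with hc | hc | hc
            · rw [hc] at hle; simp only [NV_t, NV_a, NV_b, NV_d, NV_s] at hle h1; omega
            · refine ⟨(inj _ (show IsBVertex n (BV.b i) from ⟨i1, i2⟩) (by simp) ?_).symm, hc⟩
              have h3 : NV n (aN n (i + 1)) ≤ 2 * i + 3 := by
                unfold aN; split_ifs <;> simp only [NV_t, NV_a, NV_b, NV_d, NV_s] <;> omega
              have h4 : NV n v ≠ 2 * i + 2 := by
                intro h
                rw [hc] at hle
                apply hle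
                rw [h]
                unfold aN
                split_ifs <;> simp only [NV_t, NV_a, NV_b, NV_d, NV_s] <;> omega
              rw [hc] at hle
              simp only [NV_t, NV_a, NV_b, NV_d, NV_s] at h1 ⊢
              omega
            · exact absurd hc ht
          refine ⟨i, hvb.1, R, hR, ?_⟩
          rw [hvb.2] at e1
          have : rB n (BV.a i) (aN n (i + 1)) = 0 := by
            unfold aN; split_ifs <;> simp [rB]
          rw [this] at e1
          linarith
        | b i =>
          left
          obtain ⟨⟨i1, i2⟩, hc⟩ := edge_b he
          have hin : i + 1 ≤ n := by
            by_contra hcon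
            simp only [NV_t, NV_a, NV_b, NV_d, NV_s] at h1; omega
          have ha : aN n (i + 1) = BV.a (i + 1) := by
            unfold aN; rw [if_neg (by omega)]
          have hb : bN n (i + 1) = BV.b (i + 1) := by
            unfold bN; rw [if_neg (by omega)]
          rw [ha, hb] at hc
          rcases hc with hc | hc
          · have hva : BV.a (i + 1) = v := by
              refine inj _ (show IsBVertex n (BV.a (i + 1)) from ⟨by omega, hin⟩) (by simp) ?_
              rw [hc] at hle
              simp only [NV_t, NV_a, NV_b, NV_d, NV_s] at h1 hle ⊢
              omega
            refine ⟨i + 1, hva.symm, R + 3 / 4, ?_, ?_⟩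
            · simp only [potB] at hR; linarith
            · rw [hc] at e1
              simp only [rB, if_true] at e1
              linarith
          · rw [hc] at hle
            simp only [NV_t, NV_a, NV_b, NV_d, NV_s] at h1 hle
            omega

/-- The key lemma: the old edge at `v` has negative reduced costs for `φ`. -/
lemma key {n : ℕ} {π φ : BV → BV} (hπ : IsBPolicy n π) (hπu : BWeakUnichain n π)
    (hφ : IsBPolicy n φ) (hφu : BWeakUnichain n φ) {v w : BV}
    (himp : BImproving n π v w)
    (hmin : ∀ u u', BImproving n π u u' → NB n v w ≤ NB n u u')
    (hag : ∀ u, IsBVertex n u → NV n v < NV n u → φ u = π u)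
    (hval : rB n v w + BVal n π w ≤ BVal n φ v) :
    rB n v (π v) + BVal n φ (π v) < BVal n φ v := by
  have hv : IsBVertex n v := (edge_vertex himp.1).1
  have hz : BVal n π v < rB n v w + BVal n π w := by
    have := himp.2; simp only [zB] at this; linarith
  have hrec := BVal_rec hπ hπu hv
  have hvs : v ≠ BV.s := by
    rintro rfl
    have := edge_s himp.1
    subst this
    simp [rB] at hz
  have hvd : v ≠ BV.d := by
    rintro rfl
    have h1 := edge_d himp.1
    have h2 := edge_d (hπ _ hv)
    rw [h2] at hrec
    rw [h1] at hz
    linarith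
  have hvn : NV n v ≤ 2 * n + 1 := by
    cases v with
    | t => simp only [NV_t]; omega
    | s => exact absurd rfl hvs
    | d => exact absurd rfl hvd
    | a i => have := hv.2; simp only [NV_a]; omega
    | b i => have := hv.2; simp only [NV_b]; omega
  have hab : ∀ u, IsBVertex n u → NV n v < NV n u → _ :=
    fun u h1 h2 => above hπ hπu hφ hφu v hag _ u h1 h2 le_rfl
  have he := hπ v hv
  -- the path of `π v` either is unaffected or leads to `t`
  have hC : BVal n φ (π v) = BVal n π (π v) ∨
      ∃ C : ℚ, C ≤ - potB n v - 3 / 4 ∧ BVal n π v = C + BVal n π BV.t ∧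
        rB n v (π v) + BVal n φ (π v) = C + BVal n φ BV.t := by
    rcases edge_cases he hvs with ⟨i, i1, i2, rfl, ht, hr⟩ | ⟨-, hr, hN⟩
    · right
      refine ⟨rB n (BV.a i) (π (BV.a i)), ?_, ?_, ?_⟩
      · rw [hr]; simp only [potB]; linarith
      · rw [ht] at hrec ⊢; exact hrec
      · rw [ht]
    · rcases hab (π v) (edge_vertex he).2 hN with h | ⟨C, c1, c2, c3⟩
      · exact Or.inl h
      · right
        exact ⟨rB n v (π v) + C, by linarith, by linarith, by linarith⟩
  rcases hC with h | ⟨C, c1, c2, c3⟩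
  · rw [h]; linarith
  rw [c3]
  have hvt : v ≠ BV.t := by
    rintro rfl
    simp only [potB] at c1
    linarith
  -- travel edges are not improving for `π`
  have htr : ∀ i, 1 ≤ i → i ≤ n → BVal n π (BV.a i) ≤ BVal n π BV.t := by
    intro i h1 h2
    by_contra hcon
    have := hmin BV.t (BV.a i) ⟨Or.inl ⟨i, h1, h2, rfl, rfl⟩, by simp [zB, rB]; linarith⟩
    have h3 : n + 1 ≤ NB n v w := by
      have := himp.1
      cases v with
      | t => exact absurd rfl hvt
      | s => exact absurd rfl hvs
      | d => exact absurd rfl hvd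
      | a j =>
        rcases (edge_a this).2 with rfl | rfl | rfl
        · simp only [NB]; omega
        · unfold aN; split_ifs <;> simp only [NB] <;> omega
        · simp only [NB]; omega
      | b j =>
        rcases (edge_b this).2 with rfl | rfl
        · unfold bN; split_ifs <;> simp only [NB] <;> omega
        · unfold aN; split_ifs <;> simp only [NB] <;> omega
    have h4 : NB n BV.t (BV.a i) = i := rfl
    omega
  have htv : IsBVertex n BV.t := trivial
  obtain ⟨i, i1, i2, hi⟩ := edge_t (hφ BV.t htv)
  have et := BVal_rec hφ hφu htv
  rw [hi] at et
  simp only [rB] at et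
  have hav : IsBVertex n (BV.a i) := ⟨i1, i2⟩
  have hpow : (2 : ℚ) ^ 1 ≤ 2 ^ i := pow_le_pow_right₀ (by norm_num) i1
  by_cases hle : NV n (BV.a i) ≤ NV n v
  · rcases below hφ hφu v hvn hv _ (BV.a i) 0 hav (by simp) hle le_rfl
      (by simp only [potB]; linarith) et with ⟨R, r1, r2⟩ | ⟨j, rfl, R, r1, r2⟩ | ⟨j, rfl, R, r1, r2⟩
    · linarith
    · have hpj : (0 : ℚ) < 2 ^ j := by positivity
      simp only [potB] at c1
      have hb : IsBVertex n (BV.b j) := hv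
      rcases hab (BV.b j) hb (by simp only [NV_t, NV_a, NV_b, NV_d, NV_s]; omega) with h | ⟨C', d1, d2, d3⟩
      · have : 2 ^ j + BVal n π (BV.b j) ≤ BVal n φ (BV.a j) := by
          by_cases hw : w = BV.b j
          · subst hw
            simpa [rB] using hval
          · by_contra hcon
            have := hmin (BV.a j) (BV.b j)
              ⟨Or.inr (Or.inl ⟨j, hv.1, hv.2, rfl, rfl⟩), by simp [zB, rB]; linarith⟩
            rcases (edge_a himp.1).2 with rfl | rfl | rfl
            · exact hw rfl
            · revert this
              unfold aN; split_ifs <;> simp [NB]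
            · simp [NB] at this
        linarith
      · simp only [potB, pow_succ] at d1
        linarith
    · have hpj : (0 : ℚ) < 2 ^ j := by positivity
      simp only [potB, pow_succ] at c1
      have hedge : BEdge n (BV.b j) (aN n (j + 1)) :=
        Or.inr (Or.inr (Or.inr (Or.inr (Or.inr (Or.inl ⟨j, hv.1, hv.2, rfl, rfl⟩)))))
      have hr0 : rB n (BV.b j) (aN n (j + 1)) = 0 := by
        unfold aN; split_ifs <;> simp [rB]
      have hcases := edge_cases hedge (by simp)
      simp only [reduceCtorEq, false_and, and_false, exists_false, false_or, hr0] at hcases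
      obtain ⟨-, hp1, hN⟩ := hcases
      have hpb : potB n (BV.b j) = 2 ^ j * 2 - 2 := by simp only [potB, pow_succ]
      rw [hpb] at hp1
      rcases hab _ (edge_vertex hedge).2 hN with h | ⟨C', d1, d2, d3⟩
      · have : BVal n π (aN n (j + 1)) ≤ BVal n φ (BV.b j) := by
          rcases (edge_b himp.1).2 with hw | hw
          · rcases (edge_b he).2 with hw' | hw'
            · exfalso
              rw [hw'] at hrec
              rw [hw] at hz
              linarith
            · rw [hw', hr0] at hrec
              linarith
          · rw [hw, hr0] at hval
            linarith
        linarith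
      · linarith
  · rcases hab (BV.a i) hav (by omega) with h | ⟨C', d1, d2, d3⟩
    · have := htr i i1 i2
      linarith
    · simp only [potB] at d1
      linarith

/-! ### Policies for `𝔇_n` that induce a policy for `𝔅_n` -/

/-- The policy `ψ` for `𝔇_n` induces the weak unichain policy `φ` for `𝔅_n`. -/
structure Induces (n : ℕ) (ψ : DV → DV) (φ : BV → BV) : Prop where
  pol : IsBPolicy n φ
  uni : BWeakUnichain n φ
  base : ∀ u, IsBVertex n u → u ≠ BV.s → ψ (DV.base u) = DV.x u (φ u)
  sink : ψ (DV.base BV.s) = DV.base BV.s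
  act : ∀ u, IsBVertex n u → u ≠ BV.s → ψ (DV.x u (φ u)) = DV.y u (φ u)
  xx : ∀ u w, DEdgePair n u w → ψ (DV.x u w) = DV.base u ∨ ψ (DV.x u w) = DV.y u w
  zz : ∀ u w, DEdgePair n u w → ψ (DV.z u w) = DV.base w

section
variable {n : ℕ} {p : BV → ℚ} {ψ : DV → DV} {φ : BV → BV}

lemma isDVal_base (hp : ∀ v, IsBVertex n v → v ≠ BV.s → 0 < p v ∧ p v ≤ 1)
    (h : Induces n ψ φ) {V : DV → ℚ} (hV : IsDVal n p ψ V) {u : BV} (hu : IsBVertex n u) :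
    V (DV.base u) = BVal n φ u := by
  obtain ⟨v1, v2, v3⟩ := hV
  refine eq_BVal h.pol h.uni (fun u => V (DV.base u)) v1 ?_ hu
  intro u hu hs
  have hpair : DEdgePair n u (φ u) := ⟨h.pol u hu, hs⟩
  have e1 := v2 (DV.base u) hu
  rw [h.base u hu hs] at e1
  have e2 := v2 (DV.x u (φ u)) hpair
  rw [h.act u hu hs] at e2
  have e3 := v3 u (φ u) hpair
  have e4 := v2 (DV.z u (φ u)) hpair
  rw [h.zz u _ hpair] at e4
  simp only [rD, if_true] at e1 e2 e4
  have hpp := (hp u hu hs).1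
  have : p u * (V (DV.base u) - V (DV.z u (φ u))) = 0 := by linarith
  rcases mul_eq_zero.1 this with h0 | h0
  · linarith
  · show V (DV.base u) = rB n u (φ u) + V (DV.base (φ u))
    linarith

open Classical in
/-- The explicit value function. -/
noncomputable def expVal (n : ℕ) (p : BV → ℚ) (ψ : DV → DV) (φ : BV → BV) : DV → ℚ
  | DV.base u => if IsBVertex n u then BVal n φ u else 0
  | DV.x u w => if DEdgePair n u w then
      (if ψ (DV.x u w) = DV.base u then BVal n φ u else
        p u * (rB n u w + BVal n φ w) + (1 - p u) * BVal n φ u) else 0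
  | DV.y u w => if DEdgePair n u w then
      p u * (rB n u w + BVal n φ w) + (1 - p u) * BVal n φ u else 0
  | DV.z u w => if DEdgePair n u w then rB n u w + BVal n φ w else 0

lemma expVal_spec (h : Induces n ψ φ) : IsDVal n p ψ (expVal n p ψ φ) := by
  refine ⟨?_, ?_, ?_⟩
  · simp [expVal, BVal_s]
  · intro u hu
    cases u with
    | base u =>
      have hu' : IsBVertex n u := hu
      by_cases hs : u = BV.s
      · subst hs
        rw [h.sink]; simp [rD]
      · have hpair : DEdgePair n u (φ u) := ⟨h.pol u hu, hs⟩
        rw [h.base u hu hs]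
        have hne : ψ (DV.x u (φ u)) ≠ DV.base u := by rw [h.act u hu hs]; simp
        have := BVal_rec h.pol h.uni hu'
        simp only [rD, expVal, if_pos hu', if_pos hpair, if_neg hne]
        rw [← this]; ring
    | x u w =>
      have hpair : DEdgePair n u w := hu
      have hu' : IsBVertex n u := (edge_vertex hpair.1).1
      rcases h.xx u w hpair with h1 | h1
      · simp [h1, rD, expVal, hpair, hu']
      · simp [h1, rD, expVal, hpair]
    | y u w => exact absurd hu id
    | z u w =>
      have hpair : DEdgePair n u w := hu
      have hw' : IsBVertex n w := (edge_vertex hpair.1).2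
      simp [h.zz u w hpair, rD, expVal, hpair, hw']
  · intro v w hpair
    have hu' : IsBVertex n v := (edge_vertex hpair.1).1
    simp [expVal, hpair, hu']

lemma DVal_spec (hp : ∀ v, IsBVertex n v → v ≠ BV.s → 0 < p v ∧ p v ≤ 1)
    (h : Induces n ψ φ) : IsDVal n p ψ (DVal n p ψ) := by
  have hex : ∃! V : DV → ℚ, IsDVal n p ψ V ∧ ∀ u, ¬ IsDVertex n u → V u = 0 := by
    refine ⟨expVal n p ψ φ, ⟨expVal_spec h, ?_⟩, ?_⟩
    · intro u hu
      cases u <;> simp_all [IsDVertex, expVal]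
    · rintro V ⟨hV, hV0⟩
      have hE := expVal_spec (p := p) h
      have hbase : ∀ u, IsBVertex n u → V (DV.base u) = expVal n p ψ φ (DV.base u) := by
        intro u hu
        rw [isDVal_base hp h hV hu, isDVal_base hp h hE hu]
      have hz : ∀ u w, DEdgePair n u w → V (DV.z u w) = expVal n p ψ φ (DV.z u w) := by
        intro u w hpair
        rw [hV.2.1 (DV.z u w) hpair, hE.2.1 (DV.z u w) hpair, h.zz u w hpair,
          hbase w (edge_vertex hpair.1).2]
      have hy : ∀ u w, DEdgePair n u w → V (DV.y u w) = expVal n p ψ φ (DV.y u w) := by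
        intro u w hpair
        rw [hV.2.2 u w hpair, hE.2.2 u w hpair, hz u w hpair, hbase u (edge_vertex hpair.1).1]
      funext u
      by_cases hu : IsDVertex n u
      · cases u with
        | base u => exact hbase u hu
        | x u w =>
          rw [hV.2.1 (DV.x u w) hu, hE.2.1 (DV.x u w) hu]
          rcases h.xx u w hu with h1 | h1
          · rw [h1, hbase u (edge_vertex hu.1).1]
          · rw [h1, hy u w hu]
        | y u w => exact hy u w hu
        | z u w => exact hz u w hu
      · rw [hV0 u hu]
        cases u <;> simp_all [IsDVertex, expVal]
  unfold DVal
  rw [dif_pos hex]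
  exact hex.exists.choose_spec.1

lemma DVal_base (hp : ∀ v, IsBVertex n v → v ≠ BV.s → 0 < p v ∧ p v ≤ 1)
    (h : Induces n ψ φ) {u : BV} (hu : IsBVertex n u) : DVal n p ψ (DV.base u) = BVal n φ u :=
  isDVal_base hp h (DVal_spec hp h) hu

lemma DVal_x_inactive (hp : ∀ v, IsBVertex n v → v ≠ BV.s → 0 < p v ∧ p v ≤ 1)
    (h : Induces n ψ φ) {u w : BV} (hu : DEdgePair n u w) (ha : ψ (DV.x u w) = DV.base u) :
    DVal n p ψ (DV.x u w) = BVal n φ u := by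
  have := (DVal_spec hp h).2.1 (DV.x u w) hu
  rw [this, ha, DVal_base hp h (edge_vertex hu.1).1]
  simp [rD]

lemma DVal_x_active (hp : ∀ v, IsBVertex n v → v ≠ BV.s → 0 < p v ∧ p v ≤ 1)
    (h : Induces n ψ φ) {u w : BV} (hu : DEdgePair n u w) (ha : ψ (DV.x u w) = DV.y u w) :
    DVal n p ψ (DV.x u w) = p u * (rB n u w + BVal n φ w) + (1 - p u) * BVal n φ u := by
  have hs := DVal_spec hp h
  rw [hs.2.1 (DV.x u w) hu, ha, hs.2.2 u w hu, hs.2.1 (DV.z u w) hu, h.zz u w hu,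
    DVal_base hp h (edge_vertex hu.1).1, DVal_base hp h (edge_vertex hu.1).2]
  simp [rD]

/-- Applying an improving switch to a policy inducing `φ`. -/
lemma step (hp : ∀ v, IsBVertex n v → v ≠ BV.s → 0 < p v ∧ p v ≤ 1)
    (h : Induces n ψ φ) {e : DV × DV} {ψ' : DV → DV} (hs : DApply n p ψ e ψ') :
    (Induces n ψ' φ ∧ ∃ u w, DEdgePair n u w ∧
      (e = (DV.x u w, DV.base u) ∨ e = (DV.x u w, DV.y u w))) ∨
    (∃ u w, DEdgePair n u w ∧ e = (DV.base u, DV.x u w) ∧ ψ (DV.x u w) = DV.y u w ∧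
      BImproving n φ u w ∧ Induces n ψ' (Function.update φ u w)) := by
  obtain ⟨⟨hE, hz⟩, rfl⟩ := hs
  obtain ⟨e1, e2⟩ := e
  simp only at hE hz ⊢
  simp only [zD] at hz
  rcases hE with ⟨u, w, hpair, hc⟩ | ⟨rfl, rfl⟩
  · have huv := (edge_vertex hpair.1).1
    have hwv := (edge_vertex hpair.1).2
    rcases hc with ⟨rfl, rfl⟩ | ⟨rfl, rfl⟩ | ⟨rfl, rfl⟩ | ⟨rfl, rfl⟩
    · right
      rw [DVal_base hp h huv] at hz
      have hact : ψ (DV.x u w) = DV.y u w := by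
        rcases h.xx u w hpair with h1 | h1
        · rw [DVal_x_inactive hp h hpair h1] at hz
          simp [rD] at hz
        · exact h1
      rw [DVal_x_active hp h hpair hact] at hz
      have himp : BImproving n φ u w := by
        refine ⟨hpair.1, ?_⟩
        simp only [rD] at hz
        have : 0 < p u * (rB n u w + BVal n φ w - BVal n φ u) := by linarith
        exact pos_of_mul_pos_right this (hp u huv hpair.2).1.le
      obtain ⟨g1, g2, -⟩ := improve h.pol h.uni himp
      refine ⟨u, w, hpair, rfl, hact, himp, g1, g2, ?_, ?_, ?_, ?_, ?_⟩
      · intro a ha has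
        by_cases hau : a = u
        · subst hau; simp
        · simp [hau, h.base a ha has]
      · have := h.sink
        have hus : BV.s ≠ u := fun h => hpair.2 h.symm
        simp [hus, this]
      · intro a ha has
        by_cases hau : a = u
        · subst hau; simp [hact]
        · simp [hau, h.act a ha has]
      · intro a b hab
        simpa using h.xx a b hab
      · intro a b hab
        simpa using h.zz a b hab
    · left
      refine ⟨?_, u, w, hpair, Or.inl rfl⟩
      have hne : w ≠ φ u := by
        rintro rfl
        rw [DVal_base hp h huv, DVal_x_active hp h hpair (h.act u huv hpair.2),
          ← BVal_rec h.pol h.uni huv] at hz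
        simp only [rD] at hz
        linarith
      refine ⟨h.pol, h.uni, ?_, ?_, ?_, ?_, ?_⟩
      · intro a ha has; simp [h.base a ha has]
      · simp [h.sink]
      · intro a ha has
        rw [Function.update_of_ne, h.act a ha has]
        intro hcon
        simp only [DV.x.injEq] at hcon
        obtain ⟨rfl, rfl⟩ := hcon
        exact hne rfl
      · intro a b hab
        by_cases hcon : DV.x a b = DV.x u w
        · simp only [DV.x.injEq] at hcon
          obtain ⟨rfl, rfl⟩ := hcon
          left; simp
        · rw [Function.update_of_ne hcon]; exact h.xx a b hab
      · intro a b hab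
        simpa using h.zz a b hab
    · left
      refine ⟨?_, u, w, hpair, Or.inr rfl⟩
      refine ⟨h.pol, h.uni, ?_, ?_, ?_, ?_, ?_⟩
      · intro a ha has; simp [h.base a ha has]
      · simp [h.sink]
      · intro a ha has
        by_cases hcon : DV.x a (φ a) = DV.x u w
        · rw [hcon]
          simp only [DV.x.injEq] at hcon
          obtain ⟨rfl, rfl⟩ := hcon
          simp
        · rw [Function.update_of_ne hcon, h.act a ha has]
      · intro a b hab
        by_cases hcon : DV.x a b = DV.x u w
        · simp only [DV.x.injEq] at hcon
          obtain ⟨rfl, rfl⟩ := hcon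
          right; simp
        · rw [Function.update_of_ne hcon]; exact h.xx a b hab
      · intro a b hab
        simpa using h.zz a b hab
    · exfalso
      have := (DVal_spec hp h).2.1 (DV.z u w) hpair
      rw [h.zz u w hpair] at this
      linarith
  · exfalso
    simp [rD] at hz

end

/-- Let `(v,w)` be the improving switch that Bland's policy iteration applies to a visited
policy `π` for `𝔅_n`, and let `π̄'` result from the twin policy of `π` by applying
`(x v w, y v w)` and then `(v, x v w)`. Then `(x_{v,π(v)}, v)` is improving for `π̄'` and,
in every run of policy iteration on `𝔇_n` starting at `π̄'`, it remains improving until it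
is applied or until a switch `(x u ·, y u ·)` with `𝒩_V(u) > 𝒩_V(v)` is applied. -/
theorem stmt15 (n : ℕ) (hn : 1 ≤ n) (p : BV → ℚ)
    (hp : ∀ v, IsBVertex n v → v ≠ BV.s → 0 < p v ∧ p v ≤ 1)
    (π : BV → BV) (hvis : BlandReaches n (NB n) (pi0 n) π)
    (v w : BV) (himp : BImproving n π v w)
    (hmin : ∀ u u', BImproving n π u u' → NB n v w ≤ NB n u u') :
    DImproving n p
      (Function.update (Function.update (twin π) (DV.x v w) (DV.y v w)) (DV.base v) (DV.x v w))
      (DV.x v (π v)) (DV.base v) ∧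
    ∀ (f : ℕ → (DV → DV)) (g : ℕ → DV × DV) (k : ℕ),
      f 0 = Function.update (Function.update (twin π) (DV.x v w) (DV.y v w))
        (DV.base v) (DV.x v w) →
      (∀ j < k, DApply n p (f j) (g j) (f (j + 1))) →
      (∀ j < k, g j ≠ (DV.x v (π v), DV.base v) ∧
        ∀ u w', g j = (DV.x u w', DV.y u w') → NV n u ≤ NV n v) →
      DImproving n p (f k) (DV.x v (π v)) (DV.base v) := by
  have hgood := reach_good hn hvis
  obtain ⟨hπ, hπu⟩ := hgood
  have hvv : IsBVertex n v := (edge_vertex himp.1).1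
  have hz : BVal n π v < rB n v w + BVal n π w := by
    have := himp.2; simp only [zB] at this; linarith
  have hvs : v ≠ BV.s := by
    rintro rfl
    have := edge_s himp.1
    subst this
    simp [rB] at hz
  have hwne : w ≠ π v := by
    rintro rfl
    have := BVal_rec hπ hπu hvv
    linarith
  have hpair : DEdgePair n v (π v) := ⟨hπ v hvv, hvs⟩
  suffices hmain : ∀ (f : ℕ → (DV → DV)) (g : ℕ → DV × DV) (k : ℕ),
      f 0 = Function.update (Function.update (twin π) (DV.x v w) (DV.y v w))
        (DV.base v) (DV.x v w) →
      (∀ j < k, DApply n p (f j) (g j) (f (j + 1))) →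
      (∀ j < k, g j ≠ (DV.x v (π v), DV.base v) ∧
        ∀ u w', g j = (DV.x u w', DV.y u w') → NV n u ≤ NV n v) →
      DImproving n p (f k) (DV.x v (π v)) (DV.base v) by
    refine ⟨?_, hmain⟩
    exact hmain (fun _ => Function.update (Function.update (twin π) (DV.x v w) (DV.y v w))
        (DV.base v) (DV.x v w)) (fun _ => (DV.base v, DV.base v)) 0 rfl
        (fun j hj => absurd hj (Nat.not_lt_zero j)) (fun j hj => absurd hj (Nat.not_lt_zero j))
  intro f g k hf0 hrun hcond
  -- the invariant of the run
  have hinv : ∀ j ≤ k, ∃ φ, Induces n (f j) φ ∧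
      (∀ u w', IsBVertex n u → NV n v < NV n u → DEdgePair n u w' →
        f j (DV.x u w') = DV.y u w' → w' = π u) ∧
      f j (DV.x v (π v)) = DV.y v (π v) ∧ rB n v w + BVal n π w ≤ BVal n φ v := by
    intro j
    induction j with
    | zero =>
      intro _
      obtain ⟨g1, g2, g3⟩ := improve hπ hπu himp
      refine ⟨Function.update π v w, ⟨g1, g2, ?_, ?_, ?_, ?_, ?_⟩, ?_, ?_, ?_⟩
      · intro a ha has
        rw [hf0]
        by_cases hav : a = v
        · subst hav; simp
        · simp [hav, twin, has]
      · have : BV.s ≠ v := fun h => hvs h.symm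
        rw [hf0]; simp [this, twin]
      · intro a ha has
        rw [hf0]
        by_cases hav : a = v
        · subst hav; simp
        · simp [hav, twin]
      · intro a b hab
        rw [hf0]
        by_cases hcon : DV.x a b = DV.x v w
        · simp only [DV.x.injEq] at hcon
          obtain ⟨rfl, rfl⟩ := hcon
          right; simp
        · rw [Function.update_of_ne (by simp), Function.update_of_ne hcon]
          simp only [twin]
          split_ifs <;> simp
      · intro a b hab
        rw [hf0]; simp [twin]
      · intro u w' hu hlt hp' hact
        have huv : u ≠ v := by rintro rfl; exact lt_irrefl _ hlt
        rw [hf0] at hact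
        by_contra hcon
        simp [huv, twin, hcon] at hact
      · rw [hf0]
        simp [hwne.symm, twin]
      · rw [BVal_rec g1 g2 hvv]
        have := g3 w (edge_vertex himp.1).2
        simp only [Function.update_self]
        linarith
    | succ j ih =>
      intro hj
      obtain ⟨φ, i1, i2, i3, i4⟩ := ih (by omega)
      have hstep := hrun j (by omega)
      obtain ⟨c1, c2⟩ := hcond j (by omega)
      have hupd := hstep.2
      rcases step hp i1 hstep with ⟨hI, u, x, hux, he | he⟩ | ⟨u, x, hux, he, hact, hbi, hI⟩
      · refine ⟨φ, hI, ?_, ?_, i4⟩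
        · intro a b ha hlt hab hact
          rw [hupd, he] at hact
          by_cases hcon : DV.x a b = DV.x u x
          · rw [hcon] at hact
            simp at hact
          · rw [Function.update_of_ne hcon] at hact
            exact i2 a b ha hlt hab hact
        · rw [hupd, he, Function.update_of_ne, i3]
          intro hcon
          apply c1
          rw [he]
          simp only [DV.x.injEq] at hcon
          obtain ⟨rfl, rfl⟩ := hcon
          rfl
      · refine ⟨φ, hI, ?_, ?_, i4⟩
        · intro a b ha hlt hab hact
          rw [hupd, he] at hact
          have hle := c2 u x he
          have hau : a ≠ u := by rintro rfl; omega
          rw [Function.update_of_ne (by simp [hau])] at hact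
          exact i2 a b ha hlt hab hact
        · rw [hupd, he]
          by_cases hcon : DV.x v (π v) = DV.x u x
          · rw [hcon]
            simp only [DV.x.injEq] at hcon
            obtain ⟨rfl, rfl⟩ := hcon
            simp
          · rw [Function.update_of_ne hcon, i3]
      · refine ⟨_, hI, ?_, ?_, ?_⟩
        · intro a b ha hlt hab hact'
          rw [hupd, he, Function.update_of_ne (by simp)] at hact'
          exact i2 a b ha hlt hab hact'
        · rw [hupd, he, Function.update_of_ne (by simp), i3]
        · exact i4.trans ((improve i1.pol i1.uni hbi).2.2 v hvv)
  obtain ⟨φ, i1, i2, i3, i4⟩ := hinv k le_rfl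
  have hag : ∀ u, IsBVertex n u → NV n v < NV n u → φ u = π u := by
    intro u hu hlt
    by_cases hs : u = BV.s
    · subst hs; rw [policy_s i1.pol, policy_s hπ]
    · exact i2 u (φ u) hu hlt ⟨i1.pol u hu, hs⟩ (i1.act u hu hs)
  have hkey := key hπ hπu i1.pol i1.uni himp hmin hag i4
  refine ⟨Or.inl ⟨v, π v, hpair, Or.inr (Or.inl ⟨rfl, rfl⟩)⟩, ?_⟩
  simp only [zD]
  rw [DVal_base hp i1 hvv, DVal_x_active hp i1 hpair i3]
  have hpv := (hp v hvv hvs).1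
  have : 0 < p v * (BVal n φ v - (rB n v (π v) + BVal n φ (π v))) :=
    mul_pos hpv (by linarith)
  simp only [rD]
  linarith
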